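/- arXiv:1703.09188 — 2 statements merged into one kernel-verified Lean document; each statement's English description precedes it below -/
import Mathlib

section
/- Let A be an MPO tensor in canonical form II that generates an MPU, and let a, b ∈ ℂ^{D²} be the vectors with entries a_{(α,β)} = δ_{αβ} and b_{(α,β)} = δ_{αβ}·ρ_α. Then there exists k ≤ D⁴ such that the k-fold blocked tensor is simple with these a and b; explicitly, for all indices i₁,…,i_k, j₁,…,j_k, i'₁,…,i'_k, j'₁,…,j'_k ∈ {1,…,d}: aᵀ (T^{i₁j₁}⋯T^{i_kj_k}) b = δ_{i₁j₁}⋯δ_{i_kj_k}, and (T^{i₁j₁}⋯T^{i_kj_k})(T^{i'₁j'₁}⋯T^{i'_kj'_k}) = (T^{i₁j₁}⋯T^{i_kj_k}) (b aᵀ) (T^{i'₁j'₁}⋯T^{i'_kj'_k}). -/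
/-!
The unitarity of `U^{(N)}` says that every word `T^{i₁j₁}⋯T^{i_Nj_N}` with `N ≥ 2` has trace
`∏ δ_{i_s j_s}`. Put `n = D²`, `E = d⁻¹ ∑ᵢ T^{ii}` and `e = b aᵀ`.

Canonical form II gives `E b = b`, `aᵀ E = aᵀ`, `aᵀ b = 1`, so the powers of `E - e` are `E^m - e`
for `m ≥ 1`, with trace `0` for `m ≥ 2`. A matrix whose powers are traceless from the second on is
nilpotent (`pow_card_eq_zero_of_trace`), hence `E^m = e` for `m ≥ n` (`transfer_pow_eq`). Inserting
a high power of `E` in a trace then gives `aᵀ w b = ∏ δ` for every word `w` (`dotProduct_word`); in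
particular `φ(x) = aᵀ x b` is multiplicative on the algebra `R` generated by the `T^{ij}`.

For the second identity take `k = n²` (`word_mul_word`). The left ideal
`I = {x ∈ R | tr(y x) = 0 for all y ∈ R}` of `R` consists of nilpotent matrices, so by Nakayama's
lemma the chain `V ⊇ I V ⊇ I² V ⊇ ⋯`, with `V = ℂⁿ`, decreases strictly until it reaches `0`, and a
product of `n` elements of `I` vanishes (`matrix_list_prod_eq_zero`). When `n ≥ 2`, each word of
length `n` differs from a multiple of `E^n = e` by an element of `I`. Cutting a word of length `n²`
into `n` such blocks shows that it lies in `Q = R e R`, as the product of the `n` parts in `I` is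
zero. On `Q` the identity `p q = p e q` holds because `e y e = φ(y) e` and `φ` is multiplicative
on `R`. For `D = 1` the matrix `e` is the identity.
-/

open scoped Kronecker Matrix

/-- The matrix `U^{(N)}` generated by an MPO tensor `A`. -/
noncomputable def mpoU (d D : ℕ) (A : Fin d → Fin d → Matrix (Fin D) (Fin D) ℂ) (N : ℕ) :
    Matrix (Fin N → Fin d) (Fin N → Fin d) ℂ :=
  Matrix.of fun i j => ((List.ofFn fun k => A (i k) (j k)).prod).trace

/-- `T^{ij} = Σ_m conj(A^{mi}) ⊗ A^{mj}`. -/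
noncomputable def Tmat (d D : ℕ) (A : Fin d → Fin d → Matrix (Fin D) (Fin D) ℂ)
    (i j : Fin d) : Matrix (Fin D × Fin D) (Fin D × Fin D) ℂ :=
  ∑ m : Fin d, ((A m i).map (starRingEnd ℂ)) ⊗ₖ (A m j)

/-! ### Nilpotency -/

/-- A nil left ideal `I` lies in the Jacobson radical, so by Nakayama the spaces `I^j V` lose at
least one dimension per step until they vanish. -/
lemma list_prod_smul_eq_zero {K R V : Type*} [Field K] [Ring R] [Algebra K R]
    [AddCommGroup V] [Module K V] [Module R V] [IsScalarTower K R V] [FiniteDimensional K V]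
    (I : Ideal R) (hI : ∀ x ∈ I, IsNilpotent x) (l : List R) (hl : ∀ x ∈ l, x ∈ I)
    (hlen : Module.finrank K V ≤ l.length) (v : V) : l.prod • v = 0 := by
  have hJ : I ≤ Ring.jacobson R := by
    intro x hx
    rw [← Ideal.jacobson_bot, Ideal.mem_jacobson_iff]
    intro y
    obtain ⟨u, hu⟩ := (hI _ (I.mul_mem_left y hx)).isUnit_add_one
    refine ⟨↑u⁻¹, ?_⟩
    have h : (↑u⁻¹ : R) * (y * x + 1) = 1 := by rw [← hu]; simp
    rw [mul_add, mul_one, ← mul_assoc] at h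
    simp [h]
  -- the witness `W` is `I^(length l) V`
  have key : ∀ l : List R, (∀ x ∈ l, x ∈ I) → ∃ W : Submodule R V,
      (W = ⊥ ∨ Module.finrank K (W.restrictScalars K) + l.length ≤ Module.finrank K V) ∧
      ∀ v, l.prod • v ∈ W := by
    intro l
    induction l with
    | nil =>
      intro _
      exact ⟨⊤, Or.inr (by rw [List.length_nil, add_zero]; exact Submodule.finrank_le _), by simp⟩
    | cons x l ih =>
      intro h
      obtain ⟨W, hW, hm⟩ := ih fun y hy => h y (List.mem_cons_of_mem _ hy)
      refine ⟨I • W, ?_, fun v => ?_⟩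
      · by_cases hb : W = ⊥
        · left; simp [hb]
        · right
          have hfg : W.FG := by
            have : Module.Finite K (W.restrictScalars K) := inferInstance
            have h2 : (W.restrictScalars K).FG := (Module.Finite.iff_fg).1 this
            obtain ⟨s, hs⟩ := h2
            refine ⟨s, le_antisymm (Submodule.span_le.2 fun z hz => ?_) fun z hz => ?_⟩
            · have : z ∈ W.restrictScalars K := hs ▸ Submodule.subset_span hz
              exact this
            · have : z ∈ Submodule.span K (s : Set V) := by rw [hs]; exact hz
              exact Submodule.span_le_restrictScalars K R _ this
          have hlt : I • W < W :=
            (Submodule.smul_mono_left hJ).trans_lt (hfg.jacobson_smul_lt hb)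
          have hlt' : (I • W).restrictScalars K < W.restrictScalars K := hlt
          have := Submodule.finrank_lt_finrank_of_lt hlt'
          have h3 := hW.resolve_left hb
          simp only [List.length_cons]
          omega
      · rw [List.prod_cons, mul_smul]
        exact Submodule.smul_mem_smul (h x List.mem_cons_self) (hm v)
  obtain ⟨W, hW, hm⟩ := key l hl
  have hb : W = ⊥ := by
    rcases hW with h | h
    · exact h
    · have : Module.finrank K (W.restrictScalars K) = 0 := by omega
      have h2 := Submodule.finrank_eq_zero.1 this
      simpa using h2
  simpa [hb] using hm v

/-- `list_prod_smul_eq_zero` for the action through a representation `f`. -/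
lemma map_list_prod_eq_zero {K R V : Type*} [Field K] [Ring R] [Algebra K R]
    [AddCommGroup V] [Module K V] [FiniteDimensional K V] (f : R →ₐ[K] Module.End K V)
    (I : Ideal R) (hI : ∀ x ∈ I, IsNilpotent x) (l : List R) (hl : ∀ x ∈ l, x ∈ I)
    (hlen : Module.finrank K V ≤ l.length) : f l.prod = 0 := by
  let _ : Module R V := Module.compHom V f.toRingHom
  have : IsScalarTower K R V := ⟨fun c x v => by
    change f (c • x) v = c • f x v
    simp⟩
  exact LinearMap.ext fun v => list_prod_smul_eq_zero (K := K) I hI l hl hlen v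

lemma matrix_list_prod_eq_zero {n : Type*} [Fintype n] [DecidableEq n]
    (R : Subalgebra ℂ (Matrix n n ℂ)) (I : Ideal R) (hI : ∀ x ∈ I, IsNilpotent x)
    (l : List R) (hl : ∀ x ∈ l, x ∈ I) (hlen : l.length = Fintype.card n) : l.prod = 0 := by
  have := map_list_prod_eq_zero
    ((Matrix.toLinAlgEquiv' : Matrix n n ℂ ≃ₐ[ℂ] _).toAlgHom.comp R.val) I hI l hl (by simp [hlen])
  apply Subtype.ext
  apply (Matrix.toLinAlgEquiv' : Matrix n n ℂ ≃ₐ[ℂ] _).injective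
  rw [ZeroMemClass.coe_zero, map_zero]
  exact this

/-- Factor the characteristic polynomial as `X^r q` with `q(0) ≠ 0`. Bézout for `X^(r+2)` and `q`
yields an idempotent that is a polynomial multiple of `M^2`, hence has trace zero, hence is zero;
this forces `M^r = 0`. -/
lemma pow_card_eq_zero_of_trace {n : Type*} [Fintype n] [DecidableEq n]
    (M : Matrix n n ℂ) (h : ∀ m, 2 ≤ m → (M ^ m).trace = 0) : M ^ Fintype.card n = 0 := by
  obtain ⟨q, hq, hnd⟩ := Polynomial.exists_eq_pow_rootMultiplicity_mul_and_not_dvd M.charpoly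
    (M.charpoly_monic.ne_zero) 0
  set r := Polynomial.rootMultiplicity 0 M.charpoly
  simp only [map_zero, sub_zero] at hq hnd
  have hr : r ≤ Fintype.card n := by
    rw [← M.charpoly_natDegree_eq_dim]
    exact (Polynomial.natDegree_X_pow (R := ℂ) r) ▸
      Polynomial.natDegree_le_of_dvd ⟨q, hq⟩ M.charpoly_monic.ne_zero
  have hcop : IsCoprime (Polynomial.X ^ (r + 2) : Polynomial ℂ) q :=
    ((Polynomial.irreducible_X.coprime_iff_not_dvd).2 hnd).pow_left
  obtain ⟨u, v, huv⟩ := hcop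
  set φ := Polynomial.aeval (R := ℂ) M
  have hCH : M ^ r * φ q = 0 := by
    have := M.aeval_self_charpoly
    rw [hq] at this
    simpa [φ] using this
  have h1 : φ u * M ^ (r + 2) + φ v * φ q = 1 := by
    have := congrArg φ huv
    simpa [φ] using this
  -- the spectral projection onto the nonzero eigenvalues
  have hidem : IsIdempotentElem (φ u * M ^ (r + 2)) := by
    have e : φ v * φ q = 1 - φ u * M ^ (r+2) := by rw [← h1]; abel
    have : φ u * M ^ (r + 2) * (φ v * φ q) = 0 := by
      have : φ v * φ q = φ q * φ v := by rw [← map_mul, mul_comm, map_mul]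
      rw [this, pow_add, (pow_mul_comm M r 2)]
      simp only [mul_assoc]
      rw [← mul_assoc (M ^ r), hCH]; simp
    rw [e, mul_sub, mul_one, sub_eq_zero] at this
    exact this.symm
  have htr : (φ u * M ^ (r + 2)).trace = 0 := by
    rw [show φ u = _ from Polynomial.aeval_eq_sum_range M, Finset.sum_mul, Matrix.trace_sum]
    refine Finset.sum_eq_zero fun i _ => ?_
    rw [smul_mul_assoc, Matrix.trace_smul, ← pow_add, h _ (by omega), smul_zero]
  have h0 : φ u * M ^ (r + 2) = 0 := by
    have h2 : IsIdempotentElem (Matrix.toLinAlgEquiv' (φ u * M ^ (r + 2))) := hidem.map _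
    have h3 : LinearMap.trace ℂ _ (Matrix.toLinAlgEquiv' (φ u * M ^ (r + 2))) = 0 := by
      rw [← htr]; exact Matrix.trace_toLin'_eq _
    have h4 := LinearMap.IsIdempotentElem.eq_zero_of_trace_eq_zero h2 h3
    exact Matrix.toLinAlgEquiv'.injective (h4.trans (map_zero _).symm)
  have : M ^ r = 0 := by
    rw [h0, zero_add] at h1
    have e : φ v * φ q = φ q * φ v := by rw [← map_mul, mul_comm, map_mul]
    rw [e] at h1
    rw [← mul_one (M ^ r), ← h1, ← mul_assoc, hCH, zero_mul]
  exact pow_eq_zero_of_le hr this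

/-! ### Letters with multiplicative traces -/

section Abstract

variable {P L : Type*} [Fintype P] [DecidableEq P] [Fintype L]
  (T : L → Matrix P P ℂ) (δ c : L → ℂ) (a b : P → ℂ)

/-- The trace formula for words persists when a power of the averaged letter `E = ∑ cᵢ Tᵢ` is
appended, since `E` carries total weight `∑ cᵢ δᵢ = 1`. -/
lemma transfer_pow
    (hT : ∀ l : List L, 2 ≤ l.length → (l.map T).prod.trace = (l.map δ).prod)
    (hc : ∑ i, c i * δ i = 1) (m : ℕ) : ∀ l : List L, 2 ≤ l.length + m →
      ((l.map T).prod * (∑ i, c i • T i) ^ m).trace = (l.map δ).prod := by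
  induction m with
  | zero => intro l hl; simpa using hT l hl
  | succ m ih =>
    intro l hl
    have h : (l.map T).prod * (∑ i, c i • T i) ^ (m + 1) =
        ∑ i, c i • (((l ++ [i]).map T).prod * (∑ i, c i • T i) ^ m) := by
      rw [pow_succ', ← mul_assoc, Finset.mul_sum, Finset.sum_mul]
      simp
    rw [h, Matrix.trace_sum]
    have h2 : ∀ i, (c i • (((l ++ [i]).map T).prod * (∑ i, c i • T i) ^ m)).trace =
        (l.map δ).prod * (c i * δ i) := by
      intro i
      rw [Matrix.trace_smul, ih (l ++ [i]) (by simp; omega)]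
      simp; ring
    simp_rw [h2, ← Finset.mul_sum, hc, mul_one]

lemma transfer_pow_eq
    (hT : ∀ l : List L, 2 ≤ l.length → (l.map T).prod.trace = (l.map δ).prod)
    (hc : ∑ i, c i * δ i = 1) (hEb : (∑ i, c i • T i) *ᵥ b = b)
    (haE : a ᵥ* (∑ i, c i • T i) = a) (hab : a ⬝ᵥ b = 1) (m : ℕ) (hm : 1 ≤ m)
    (hcard : Fintype.card P ≤ m) :
    (∑ i, c i • T i) ^ m = Matrix.vecMulVec b a := by
  set E := ∑ i, c i • T i with hE
  have hee : Matrix.vecMulVec b a * Matrix.vecMulVec b a = Matrix.vecMulVec b a := by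
    rw [Matrix.vecMulVec_mul_vecMulVec, hab]; simp
  have hEe : E * Matrix.vecMulVec b a = Matrix.vecMulVec b a := by
    rw [Matrix.mul_vecMulVec, hEb]
  have heE : Matrix.vecMulVec b a * E = Matrix.vecMulVec b a := by
    rw [Matrix.vecMulVec_mul, haE]
  have hpow : ∀ r, (E - Matrix.vecMulVec b a) ^ (r + 1) = E ^ (r + 1) - Matrix.vecMulVec b a := by
    intro r
    induction r with
    | zero => simp
    | succ r ih =>
      have h1 : Matrix.vecMulVec b a * E ^ (r + 1) = Matrix.vecMulVec b a := by
        clear ih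
        induction r with
        | zero => simpa using heE
        | succ r ih => rw [pow_succ, ← mul_assoc, ih, heE]
      rw [pow_succ', ih, sub_mul, mul_sub, mul_sub, hEe, hee, h1, ← pow_succ']
      simp
  have hnil : (E - Matrix.vecMulVec b a) ^ Fintype.card P = 0 := by
    apply pow_card_eq_zero_of_trace
    intro r hr
    obtain ⟨s, rfl⟩ : ∃ s, r = s + 1 := ⟨r - 1, by omega⟩
    rw [hpow, Matrix.trace_sub]
    have := transfer_pow T δ c hT hc (s + 1) [] (by simpa using hr)
    simp only [List.map_nil, List.prod_nil, one_mul] at this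
    rw [this, Matrix.trace_vecMulVec, dotProduct_comm, hab, sub_self]
  obtain ⟨s, rfl⟩ : ∃ s, m = s + 1 := ⟨m - 1, by omega⟩
  have := hpow s
  rw [pow_eq_zero_of_le hcard hnil] at this
  exact (sub_eq_zero.1 this.symm)

lemma dotProduct_word
    (hT : ∀ l : List L, 2 ≤ l.length → (l.map T).prod.trace = (l.map δ).prod)
    (hc : ∑ i, c i * δ i = 1) (hEb : (∑ i, c i • T i) *ᵥ b = b)
    (haE : a ᵥ* (∑ i, c i • T i) = a) (hab : a ⬝ᵥ b = 1) (l : List L) :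
    a ⬝ᵥ ((l.map T).prod *ᵥ b) = (l.map δ).prod := by
  have h := transfer_pow T δ c hT hc (Fintype.card P + 2) l (by omega)
  rw [transfer_pow_eq T δ c a b hT hc hEb haE hab _ (by omega) (by omega),
    Matrix.mul_vecMulVec, Matrix.trace_vecMulVec, dotProduct_comm] at h
  exact h

/-- Words of length `n²`, with `n ≥ 2` the matrix size, multiply through the rank-one projection
`b aᵀ`. -/
lemma word_mul_word
    (hT : ∀ l : List L, 2 ≤ l.length → (l.map T).prod.trace = (l.map δ).prod)
    (hc : ∑ i, c i * δ i = 1) (hEb : (∑ i, c i • T i) *ᵥ b = b)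
    (haE : a ᵥ* (∑ i, c i • T i) = a) (hab : a ⬝ᵥ b = 1) (hP : 2 ≤ Fintype.card P)
    (l l' : List L) (hl : l.length = Fintype.card P * Fintype.card P)
    (hl' : l'.length = Fintype.card P * Fintype.card P) :
    (l.map T).prod * (l'.map T).prod =
      (l.map T).prod * Matrix.vecMulVec b a * (l'.map T).prod := by
  set n := Fintype.card P with hn
  set e := Matrix.vecMulVec b a with he
  set E := ∑ i, c i • T i with hE
  let R : Subalgebra ℂ (Matrix P P ℂ) := Algebra.adjoin ℂ (Set.range T)
  have hTR : ∀ i, T i ∈ R := fun i => Algebra.subset_adjoin ⟨i, rfl⟩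
  have hWR : ∀ l : List L, (l.map T).prod ∈ R := fun l =>
    list_prod_mem (by simpa using fun i _ => hTR i)
  have hER : E ∈ R := sum_mem fun i _ => R.smul_mem (hTR i) _
  have hEn : E ^ n = e := transfer_pow_eq T δ c a b hT hc hEb haE hab n (by omega) le_rfl
  have heR : e ∈ R := hEn ▸ pow_mem hER n
  -- every element of `R` is a combination of words
  have hspan : ∀ x ∈ R, x ∈ Submodule.span ℂ (Set.range fun l : List L => (l.map T).prod) := by
    intro x hx
    have hx' : x ∈ Subalgebra.toSubmodule R := hx
    rw [Algebra.adjoin_eq_span] at hx'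
    refine Submodule.span_mono ?_ hx'
    intro y hy
    obtain ⟨w, hw, rfl⟩ := Submonoid.exists_list_of_mem_closure hy
    obtain ⟨w', rfl⟩ : w ∈ Set.range (List.map T) := by
      rw [Set.range_list_map]; exact hw
    exact ⟨w', rfl⟩
  let φ : Matrix P P ℂ →ₗ[ℂ] ℂ :=
    { toFun := fun x => a ⬝ᵥ (x *ᵥ b)
      map_add' := fun x y => by rw [Matrix.add_mulVec, dotProduct_add]
      map_smul' := fun r x => by simp [Matrix.smul_mulVec] }
  have hφW : ∀ l : List L, φ (l.map T).prod = (l.map δ).prod :=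
    dotProduct_word T δ c a b hT hc hEb haE hab
  have hφmul : ∀ x ∈ R, ∀ y ∈ R, φ (x * y) = φ x * φ y := by
    intro x hx y hy
    have hx' := hspan x hx
    have hy' := hspan y hy
    clear hx hy
    induction hx', hy' using Submodule.span_induction₂ with
    | mem_mem x y hx hy =>
      obtain ⟨w, rfl⟩ := hx
      obtain ⟨w', rfl⟩ := hy
      have := hφW (w ++ w')
      simp only [List.map_append, List.prod_append] at this
      simp only [this, hφW]
    | zero_left => simp
    | zero_right => simp
    | add_left x y z _ _ _ h1 h2 => rw [add_mul, map_add, map_add, add_mul, h1, h2]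
    | add_right x y z _ _ _ h1 h2 => rw [mul_add, map_add, map_add, mul_add, h1, h2]
    | smul_left r x y _ _ h => simp [h, mul_assoc]
    | smul_right r x y _ _ h => simp [h, mul_left_comm]
  have hexe : ∀ x, e * x * e = φ x • e := by
    intro x
    rw [he, Matrix.vecMulVec_mul, Matrix.vecMulVec_mul_vecMulVec, ← Matrix.dotProduct_mulVec,
      Matrix.vecMulVec_smul]
    rfl
  -- the radical of the trace form of `R`
  let I : Ideal R :=
    { carrier := {x | ∀ y ∈ R, (y * (x : Matrix P P ℂ)).trace = 0}
      add_mem' := fun {x z} hx hz y hy => by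
        simp [mul_add, hx y hy, hz y hy]
      zero_mem' := fun y _ => by simp
      smul_mem' := fun r x hx y hy => by
        have := hx (y * r) (mul_mem hy r.2)
        simpa [mul_assoc] using this }
  have hI : ∀ x ∈ I, IsNilpotent x := by
    intro x hx
    refine ⟨n, Subtype.ext ?_⟩
    simp only [SubmonoidClass.coe_pow, ZeroMemClass.coe_zero]
    apply pow_card_eq_zero_of_trace
    intro m hm
    obtain ⟨s, rfl⟩ : ∃ s, m = s + 1 := ⟨m - 1, by omega⟩
    rw [pow_succ]
    exact hx _ (pow_mem x.2 s)
  have hblock : ∀ w : List L, w.length = n → ∃ x ∈ I,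
      (w.map T).prod = (w.map δ).prod • e + (x : Matrix P P ℂ) := by
    intro w hw
    refine ⟨⟨(w.map T).prod - (w.map δ).prod • e, sub_mem (hWR w) (R.smul_mem heR _)⟩, ?_, by simp⟩
    intro y hy
    have hy' := hspan y hy
    clear hy
    induction hy' using Submodule.span_induction with
    | mem y h =>
      obtain ⟨w', rfl⟩ := h
      have h1 := hT (w' ++ w) (by simp; omega)
      have h2 := transfer_pow T δ c hT hc n w' (by omega)
      rw [← hE, hEn] at h2
      simp only [List.map_append, List.prod_append] at h1
      simp [mul_sub, h1, h2, mul_comm]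
    | zero => simp
    | add x y _ _ hx hy => rw [add_mul, Matrix.trace_add, hx, hy, add_zero]
    | smul r x _ hx => rw [smul_mul_assoc, Matrix.trace_smul, hx, smul_zero]
  let Q : Submodule ℂ (Matrix P P ℂ) := Submodule.span ℂ {z | ∃ x ∈ R, ∃ y ∈ R, z = x * e * y}
  have hQmul : ∀ x ∈ R, ∀ q ∈ Q, x * q ∈ Q := by
    intro x hx q hq
    induction hq using Submodule.span_induction with
    | mem q h =>
      obtain ⟨u, hu, v, hv, rfl⟩ := h
      exact Submodule.subset_span ⟨x * u, mul_mem hx hu, v, hv, by simp [mul_assoc]⟩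
    | zero => simp
    | add p q _ _ hp hq => rw [mul_add]; exact add_mem hp hq
    | smul r q _ hq => rw [mul_smul_comm]; exact Q.smul_mem _ hq
  -- modulo `Q`, a word of `m` blocks is a product of `m` elements of `I`
  have hblocks : ∀ m : ℕ, ∀ w : List L, w.length = m * n → ∃ xs : List R, xs.length = m ∧
      (∀ x ∈ xs, x ∈ I) ∧ (w.map T).prod - (xs.prod : R) ∈ Q := by
    intro m
    induction m with
    | zero =>
      intro w hw
      refine ⟨[], rfl, by simp, ?_⟩
      have : w = [] := List.length_eq_zero_iff.1 (by simpa using hw)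
      simp [this]
    | succ m ih =>
      intro w hw
      rw [Nat.succ_mul] at hw
      obtain ⟨x, hx, hwx⟩ := hblock (w.take n) (by simp; omega)
      obtain ⟨xs, hlen, hxs, hq⟩ := ih (w.drop n) (by simp; omega)
      refine ⟨x :: xs, by simp [hlen], List.forall_mem_cons.2 ⟨hx, hxs⟩, ?_⟩
      have hsplit : (w.map T).prod = ((w.take n).map T).prod * ((w.drop n).map T).prod := by
        rw [← List.prod_append, ← List.map_append, List.take_append_drop]
      have : (w.map T).prod - ((x :: xs).prod : R) =
          ((w.take n).map δ).prod • (1 * e * ((w.drop n).map T).prod)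
          + (x : Matrix P P ℂ) * (((w.drop n).map T).prod - (xs.prod : R)) := by
        rw [hsplit, hwx, add_mul, mul_sub, List.prod_cons, MulMemClass.coe_mul, one_mul,
          smul_mul_assoc]
        abel
      rw [this]
      exact add_mem (Q.smul_mem _ (Submodule.subset_span ⟨1, one_mem R, _, hWR _, rfl⟩))
        (hQmul _ x.2 _ hq)
  have hmemQ : ∀ w : List L, w.length = n * n → (w.map T).prod ∈ Q := by
    intro w hw
    obtain ⟨xs, hlen, hxs, hq⟩ := hblocks n w hw
    rw [matrix_list_prod_eq_zero R I hI xs hxs hlen] at hq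
    simpa using hq
  have hQQ : ∀ p ∈ Q, ∀ q ∈ Q, p * q = p * e * q := by
    intro p hp q hq
    induction hp, hq using Submodule.span_induction₂ with
    | mem_mem p q hp hq =>
      obtain ⟨x, hx, y, hy, rfl⟩ := hp
      obtain ⟨u, hu, v, hv, rfl⟩ := hq
      have h1 : x * e * y * (u * e * v) = x * (e * (y * u) * e) * v := by simp only [mul_assoc]
      have h2 : x * e * y * e * (u * e * v) = x * ((e * y * e) * u * e) * v := by
        simp only [mul_assoc]
      rw [h1, h2, hexe, hexe, hφmul y hy u hu, smul_mul_assoc, smul_mul_assoc, hexe, smul_smul]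
    | zero_left => simp
    | zero_right => simp
    | add_left x y z _ _ _ h1 h2 => rw [add_mul, add_mul, add_mul, h1, h2]
    | add_right x y z _ _ _ h1 h2 => rw [mul_add, mul_add, h1, h2]
    | smul_left r x y _ _ h => simp only [smul_mul_assoc, h]
    | smul_right r x y _ _ h => simp only [mul_smul_comm, h]
  exact hQQ _ (hmemQ l hl) _ (hmemQ l' hl')

end Abstract

/-! ### The words of an MPU -/

lemma prod_ofFn_sum {S : Type*} [Semiring S] {d : ℕ} : ∀ (N : ℕ) (f : Fin N → Fin d → S),
    (List.ofFn fun s => ∑ m, f s m).prod =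
      ∑ m : Fin N → Fin d, (List.ofFn fun s => f s (m s)).prod := by
  intro N
  induction N with
  | zero => intro f; simp
  | succ N ih =>
    intro f
    rw [← (Fin.consEquiv fun _ => Fin d).sum_comp, Fintype.sum_prod_type]
    simp only [List.ofFn_succ, List.prod_cons, Fin.consEquiv_apply, Fin.cons_zero, Fin.cons_succ,
      ih, Finset.sum_mul_sum]

lemma prod_ofFn_kronecker {D : ℕ} : ∀ (N : ℕ) (f g : Fin N → Matrix (Fin D) (Fin D) ℂ),
    (List.ofFn fun s => ((f s).map (starRingEnd ℂ)) ⊗ₖ (g s)).prod =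
      ((List.ofFn f).prod.map (starRingEnd ℂ)) ⊗ₖ (List.ofFn g).prod := by
  intro N
  induction N with
  | zero => intro f g; simp [Matrix.map_one]
  | succ N ih =>
    intro f g
    simp only [List.ofFn_succ, List.prod_cons, ih, ← Matrix.mul_kronecker_mul, Matrix.map_mul]

/-- The entries of `U† U = 1`, read as traces of words in the `T^{ij}`. -/
lemma trace_Tmat_word (d D : ℕ) (A : Fin d → Fin d → Matrix (Fin D) (Fin D) ℂ) (N : ℕ)
    (h : mpoU d D A N ∈ Matrix.unitaryGroup (Fin N → Fin d) ℂ) (i j : Fin N → Fin d) :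
    (List.ofFn fun s => Tmat d D A (i s) (j s)).prod.trace =
      ∏ s, (if i s = j s then (1 : ℂ) else 0) := by
  have h1 := congrFun (congrFun (Matrix.mem_unitaryGroup_iff'.1 h) i) j
  have h2 : (1 : Matrix (Fin N → Fin d) (Fin N → Fin d) ℂ) i j =
      ∏ s, (if i s = j s then (1 : ℂ) else 0) := by
    rw [Matrix.one_apply, Finset.prod_ite_zero]
    simp [funext_iff]
  rw [← h2, ← h1]
  simp only [Tmat, prod_ofFn_sum, prod_ofFn_kronecker, Matrix.trace_sum, Matrix.trace_kronecker,
    Matrix.mul_apply, Matrix.star_apply, mpoU, Matrix.of_apply]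
  refine Finset.sum_congr rfl fun m _ => ?_
  congr 1
  simp [Matrix.trace]

/-- If an MPO tensor `A` in canonical form II (with fixed-point density `ρ`) generates an MPU,
then there is a `k ≤ D⁴` such that the `k`-fold blocked tensor is simple, with witnessing
vectors `a_{(α,β)} = δ_{αβ}` and `b_{(α,β)} = δ_{αβ} ρ_α`. -/
theorem stmt4 (d D : ℕ) (hd : 1 ≤ d) (hD : 1 ≤ D)
    (A : Fin d → Fin d → Matrix (Fin D) (Fin D) ℂ)
    (hMPU : ∀ N : ℕ, 2 ≤ N → mpoU d D A N ∈ Matrix.unitaryGroup (Fin N → Fin d) ℂ)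
    (ρ : Fin D → ℝ) (hρpos : ∀ α, 0 < ρ α) (hρtr : ∑ α, ρ α = 1)
    (hCF1 : ∑ i : Fin d, ∑ j : Fin d, (A i j)ᴴ * A i j
      = (d : ℂ) • (1 : Matrix (Fin D) (Fin D) ℂ))
    (hCF2 : ∑ i : Fin d, ∑ j : Fin d,
        A i j * Matrix.diagonal (fun α => (ρ α : ℂ)) * (A i j)ᴴ =
        (d : ℂ) • Matrix.diagonal (fun α => (ρ α : ℂ))) :
    ∃ k : ℕ, 1 ≤ k ∧ k ≤ D ^ 4 ∧
      (∀ i j : Fin k → Fin d,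
        (fun p : Fin D × Fin D => if p.1 = p.2 then (1 : ℂ) else 0) ⬝ᵥ
          ((List.ofFn fun s => Tmat d D A (i s) (j s)).prod *ᵥ
            (fun p : Fin D × Fin D => if p.1 = p.2 then (ρ p.1 : ℂ) else 0)) =
        ∏ s : Fin k, (if i s = j s then (1 : ℂ) else 0)) ∧
      (∀ i j i' j' : Fin k → Fin d,
        (List.ofFn fun s => Tmat d D A (i s) (j s)).prod *
          (List.ofFn fun s => Tmat d D A (i' s) (j' s)).prod =
        (List.ofFn fun s => Tmat d D A (i s) (j s)).prod *
          Matrix.vecMulVec (fun p : Fin D × Fin D => if p.1 = p.2 then (ρ p.1 : ℂ) else 0)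
            (fun p : Fin D × Fin D => if p.1 = p.2 then (1 : ℂ) else 0) *
          (List.ofFn fun s => Tmat d D A (i' s) (j' s)).prod) := by
  set a : Fin D × Fin D → ℂ := fun p => if p.1 = p.2 then (1 : ℂ) else 0 with ha
  set b : Fin D × Fin D → ℂ := fun p => if p.1 = p.2 then (ρ p.1 : ℂ) else 0 with hb
  have hd0 : (d : ℂ) ≠ 0 := by exact_mod_cast (by omega : d ≠ 0)
  let T : Fin d × Fin d → Matrix (Fin D × Fin D) (Fin D × Fin D) ℂ := fun p => Tmat d D A p.1 p.2
  let δ : Fin d × Fin d → ℂ := fun p => if p.1 = p.2 then 1 else 0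
  let c : Fin d × Fin d → ℂ := fun p => if p.1 = p.2 then (d : ℂ)⁻¹ else 0
  have hword : ∀ {N : ℕ} (i j : Fin N → Fin d), (List.ofFn fun s => Tmat d D A (i s) (j s)) =
      (List.ofFn fun s => (i s, j s)).map T := fun i j => by
    rw [List.map_ofFn]; rfl
  have hdelta : ∀ {N : ℕ} (i j : Fin N → Fin d), (∏ s, if i s = j s then (1 : ℂ) else 0) =
      ((List.ofFn fun s => (i s, j s)).map δ).prod := fun i j => by
    rw [List.map_ofFn, List.prod_ofFn]; rfl
  have hT : ∀ l : List (Fin d × Fin d), 2 ≤ l.length →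
      (l.map T).prod.trace = (l.map δ).prod := by
    intro l hl
    have := trace_Tmat_word d D A l.length (hMPU _ hl) (fun s => (l.get s).1) fun s => (l.get s).2
    rw [hword, hdelta] at this
    simpa using this
  have hE : ∑ i, c i • T i = (d : ℂ)⁻¹ • ∑ i, Tmat d D A i i := by
    rw [Fintype.sum_prod_type, Finset.smul_sum]
    refine Finset.sum_congr rfl fun i _ => ?_
    rw [Finset.sum_eq_single i]
    · simp [c, T]
    · intro j _ hj
      simp [c, hj.symm]
    · simp
  have hc : ∑ i, c i * δ i = 1 := by
    rw [Fintype.sum_prod_type]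
    simp [c, δ, hd0]
  have hab : a ⬝ᵥ b = 1 := by
    simp only [dotProduct, Fintype.sum_prod_type, ha, hb]
    simp
    exact_mod_cast hρtr
  have hEb : (∑ i, c i • T i) *ᵥ b = b := by
    rw [hE, Matrix.smul_mulVec, inv_smul_eq_iff₀ hd0]
    ext ⟨α, β⟩
    have h := congrFun (congrFun hCF2 β) α
    simp only [Matrix.sum_apply, Matrix.smul_apply, Matrix.mul_apply, Matrix.diagonal_apply,
      Matrix.conjTranspose_apply] at h
    rw [Finset.sum_comm] at h
    simp only [Matrix.mulVec, dotProduct, Matrix.sum_apply, Tmat, Fintype.sum_prod_type,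
      Matrix.kroneckerMap_apply, Matrix.map_apply, hb, Pi.smul_apply]
    simp only [mul_ite, mul_zero, Finset.sum_ite_eq, Finset.sum_ite_eq', Finset.mem_univ,
      if_true] at h ⊢
    have e : (if α = β then (ρ α : ℂ) else 0) = if β = α then (ρ β : ℂ) else 0 := by
      by_cases hh : α = β
      · simp [hh]
      · simp [hh, Ne.symm hh]
    rw [e, ← h]
    simp only [Finset.sum_mul]
    rw [Finset.sum_comm]
    refine Finset.sum_congr rfl fun i _ => ?_
    rw [Finset.sum_comm]
    refine Finset.sum_congr rfl fun m _ => Finset.sum_congr rfl fun x _ => ?_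
    simp only [RCLike.star_def]
    ring
  have haE : a ᵥ* (∑ i, c i • T i) = a := by
    rw [hE, Matrix.vecMul_smul, inv_smul_eq_iff₀ hd0]
    ext ⟨α, β⟩
    have h := congrFun (congrFun hCF1 α) β
    simp only [Matrix.sum_apply, Matrix.smul_apply, Matrix.mul_apply, Matrix.one_apply,
      Matrix.conjTranspose_apply] at h
    rw [Finset.sum_comm] at h
    simp only [Matrix.vecMul, dotProduct, Matrix.sum_apply, Tmat, Fintype.sum_prod_type,
      Matrix.kroneckerMap_apply, Matrix.map_apply, ha, Pi.smul_apply]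
    simp only [ite_mul, zero_mul, one_mul, Finset.sum_ite_eq, Finset.mem_univ, if_true]
    rw [← h, Finset.sum_comm]
    refine Finset.sum_congr rfl fun i _ => ?_
    rw [Finset.sum_comm]
    rfl
  refine ⟨D ^ 4, Nat.one_le_pow _ _ hD, le_rfl, fun i j => ?_, fun i j i' j' => ?_⟩
  · rw [hword, hdelta]
    exact dotProduct_word T δ c a b hT hc hEb haE hab _
  · rcases hD.eq_or_lt with h1 | h1
    -- the trace formula says nothing about words of length `n = 1`, but here `b aᵀ` is `1`
    · subst h1
      have : Matrix.vecMulVec b a = 1 := by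
        ext p q
        have hr : ρ 0 = 1 := by simpa using hρtr
        have hpq : p = q := Subsingleton.elim _ _
        have hp : p = (0, 0) := Subsingleton.elim _ _
        subst hpq
        simp [Matrix.vecMulVec_apply, ha, hb, hp, hr]
      rw [this, mul_one]
    · rw [hword, hword]
      refine word_mul_word T δ c a b hT hc hEb haE hab ?_ _ _ ?_ ?_
      · simp only [Fintype.card_prod, Fintype.card_fin]; nlinarith
      · simp only [Fintype.card_prod, Fintype.card_fin, List.length_ofFn]; ring
      · simp only [Fintype.card_prod, Fintype.card_fin, List.length_ofFn]; ring
end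

section
/- Let A be an MPO tensor generating an MPU, and let a, b ∈ ℂ^{D²} satisfy aᵀE = aᵀ, Eb = b and aᵀb = 1 (left and right fixed points of the transfer matrix). Then aᵀ T^{ij} b = δ_{ij} for all i, j ∈ {1,…,d}. -/
/-!
Unitarity of `U^{(N)}`, read entrywise, says `Tr(T^{i₁j₁} ⋯ T^{i_N j_N}) = ∏ δ_{i_k j_k}` for `N ≥ 2`
(`trace_prod_Tmat`). Averaging over `i_k = j_k` on all sites but the first gives
`Tr(T^{ij} E^n) = δ_{ij}` for `n ≥ 1` (`trace_Tmat_mul_transferT_pow`), and hence `Tr(E^n) = 1` for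
`n ≥ 2`.

Put `P = b aᵀ`. The fixed-point equations give `E P = P E = P = P²`, so `M = E - P` satisfies
`M^n = E^n - P` for `n ≥ 1`, and therefore `Tr(M^n) = 0` for `n ≥ 2`. In characteristic zero this
forces `M` to be nilpotent (`isNilpotent_of_trace_pow_eq_zero`), so `E^n = P` for some `n ≥ 1`, and
`aᵀ T^{ij} b = Tr(T^{ij} P) = Tr(T^{ij} E^n) = δ_{ij}`.
-/


open scoped Kronecker Matrix

/-- The transfer matrix `E = (1/d) Σ_i T^{ii}`. -/
noncomputable def transferT (d D : ℕ) (A : Fin d → Fin d → Matrix (Fin D) (Fin D) ℂ) :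
    Matrix (Fin D × Fin D) (Fin D × Fin D) ℂ :=
  ((d : ℂ))⁻¹ • ∑ i : Fin d, Tmat d D A i i

/-- Distributivity for an ordered product of sums in a noncommutative ring. -/
lemma list_prod_ofFn_sum {R ι : Type*} [Semiring R] [Fintype ι] (n : ℕ) (F : Fin n → ι → R) :
    (List.ofFn fun k => ∑ m, F k m).prod
      = ∑ f : Fin n → ι, (List.ofFn fun k => F k (f k)).prod := by
  induction n with
  | zero => simp
  | succ n ih =>
    rw [← (Fin.consEquiv fun _ => ι).sum_comp, Fintype.sum_prod_type]
    simp [List.ofFn_succ, ih, Finset.sum_mul_sum, Fin.consEquiv]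

lemma list_prod_ofFn_kronecker {m : Type*} [Fintype m] [DecidableEq m] (n : ℕ)
    (X Y : Fin n → Matrix m m ℂ) :
    (List.ofFn fun k => X k ⊗ₖ Y k).prod = (List.ofFn X).prod ⊗ₖ (List.ofFn Y).prod := by
  induction n with
  | zero => simp
  | succ n ih => simp [List.ofFn_succ, ih, Matrix.mul_kronecker_mul]

lemma star_trace_list_prod {m : Type*} [Fintype m] [DecidableEq m] (n : ℕ)
    (X : Fin n → Matrix m m ℂ) :
    star (List.ofFn X).prod.trace
      = (List.ofFn fun k => (X k).map (starRingEnd ℂ)).prod.trace := by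
  have h : (List.ofFn fun k => (X k).map (starRingEnd ℂ)).prod
      = (starRingEnd ℂ).mapMatrix (List.ofFn X).prod := by
    rw [map_list_prod, List.map_ofFn]
    rfl
  rw [h]
  simp [Matrix.trace]

/-- The entries of `U^{(N)†} U^{(N)}` are traces of ordered products of the `T^{ij}`. -/
lemma star_mpoU_mul_mpoU_apply (d D : ℕ) (A : Fin d → Fin d → Matrix (Fin D) (Fin D) ℂ) (N : ℕ)
    (I J : Fin N → Fin d) :
    (star (mpoU d D A N) * mpoU d D A N) I J
      = (List.ofFn fun k => Tmat d D A (I k) (J k)).prod.trace := by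
  simp only [Tmat, list_prod_ofFn_sum, Matrix.trace_sum, Matrix.mul_apply]
  refine Finset.sum_congr rfl fun M _ => ?_
  rw [list_prod_ofFn_kronecker, Matrix.trace_kronecker, ← star_trace_list_prod]
  simp [mpoU, Matrix.star_apply]

lemma trace_prod_Tmat (d D : ℕ) (A : Fin d → Fin d → Matrix (Fin D) (Fin D) ℂ)
    (hMPU : ∀ N : ℕ, 2 ≤ N → mpoU d D A N ∈ Matrix.unitaryGroup (Fin N → Fin d) ℂ)
    (N : ℕ) (hN : 2 ≤ N) (I J : Fin N → Fin d) :
    (List.ofFn fun k => Tmat d D A (I k) (J k)).prod.trace = if I = J then 1 else 0 := by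
  rw [← star_mpoU_mul_mpoU_apply, Matrix.mem_unitaryGroup_iff'.1 (hMPU N hN), Matrix.one_apply]

lemma trace_Tmat_mul_transferT_pow (d D : ℕ) (hd : 1 ≤ d)
    (A : Fin d → Fin d → Matrix (Fin D) (Fin D) ℂ)
    (hMPU : ∀ N : ℕ, 2 ≤ N → mpoU d D A N ∈ Matrix.unitaryGroup (Fin N → Fin d) ℂ)
    (n : ℕ) (hn : 1 ≤ n) (i j : Fin d) :
    (Tmat d D A i j * transferT d D A ^ n).trace = if i = j then 1 else 0 := by
  have hd0 : (d : ℂ) ≠ 0 := by exact_mod_cast (by omega : d ≠ 0)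
  have hpow : (∑ m : Fin d, Tmat d D A m m) ^ n
      = ∑ f : Fin n → Fin d, (List.ofFn fun k => Tmat d D A (f k) (f k)).prod := by
    rw [← list_prod_ofFn_sum n fun _ m => Tmat d D A m m, List.ofFn_const, List.prod_replicate]
  have hterm (f : Fin n → Fin d) :
      (Tmat d D A i j * (List.ofFn fun k => Tmat d D A (f k) (f k)).prod).trace
        = if i = j then 1 else 0 := by
    have h := trace_prod_Tmat d D A hMPU (n + 1) (by omega) (Fin.cons i f) (Fin.cons j f)
    simpa [List.ofFn_succ, Fin.cons_inj] using h
  rw [transferT, smul_pow, hpow, Matrix.mul_smul, Matrix.trace_smul, Finset.mul_sum,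
    Matrix.trace_sum]
  simp [hterm, hd0]

/-- If `χ_M = X^k q` with `q(0) ≠ 0`, Bézout yields `p` divisible by `X^{k+2}` with
`p ≡ 1 mod q`. Then `p(M)` is idempotent of trace zero, hence zero, while `p(M) M^k = M^k`. -/
lemma isNilpotent_of_trace_pow_eq_zero {m : Type*} [Fintype m] [DecidableEq m]
    (M : Matrix m m ℂ) (h : ∀ n, 2 ≤ n → (M ^ n).trace = 0) : IsNilpotent M := by
  obtain ⟨q, hq, hndvd⟩ := Polynomial.exists_eq_pow_rootMultiplicity_mul_and_not_dvd
    M.charpoly M.charpoly_monic.ne_zero 0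
  rw [Polynomial.C_0, sub_zero] at hq hndvd
  set k := M.charpoly.rootMultiplicity 0
  have hcop : IsCoprime (Polynomial.X ^ (k + 2)) q :=
    ((Polynomial.irreducible_X.coprime_iff_not_dvd).2 hndvd).pow_left
  obtain ⟨u, v, huv⟩ := hcop
  have hCH : M ^ k * Polynomial.aeval M q = 0 := by
    have := M.aeval_self_charpoly
    rw [hq] at this
    simpa using this
  set p := u * Polynomial.X ^ (k + 2) with hp
  have hvq : v * q = 1 - p := by rw [← huv]; ring
  have hMp : M ^ k * Polynomial.aeval M p = M ^ k := by
    have h0 : Polynomial.aeval M (Polynomial.X ^ k * q * v) = 0 := by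
      rw [map_mul, map_mul, map_pow, Polynomial.aeval_X, hCH, zero_mul]
    rw [show Polynomial.X ^ k * q * v = Polynomial.X ^ k - Polynomial.X ^ k * p by
      rw [mul_assoc, mul_comm q v, hvq]; ring] at h0
    simp only [map_sub, map_mul, map_pow, Polynomial.aeval_X] at h0
    exact (sub_eq_zero.1 h0).symm
  have hidem : IsIdempotentElem (Polynomial.aeval M p) := by
    have hfac : Polynomial.aeval M p = Polynomial.aeval M (u * Polynomial.X ^ 2) * M ^ k := by
      rw [hp, show u * Polynomial.X ^ (k + 2) = u * Polynomial.X ^ 2 * Polynomial.X ^ k by ring,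
        map_mul _ (u * _), map_pow, Polynomial.aeval_X]
    unfold IsIdempotentElem
    nth_rewrite 1 [hfac]
    rw [mul_assoc, hMp, ← hfac]
  have htr : (Polynomial.aeval M p).trace = 0 := by
    rw [hp, map_mul, map_pow, Polynomial.aeval_X, Polynomial.aeval_eq_sum_range, Finset.sum_mul,
      Matrix.trace_sum]
    refine Finset.sum_eq_zero fun l _ => ?_
    rw [Matrix.smul_mul, ← pow_add, Matrix.trace_smul, h _ (by omega), smul_zero]
  have hzero : Polynomial.aeval M p = 0 := by
    have hid' : IsIdempotentElem (Matrix.toLin' (Polynomial.aeval M p)) := by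
      unfold IsIdempotentElem
      rw [Module.End.mul_eq_comp, ← Matrix.toLin'_mul, hidem.eq]
    have := (LinearMap.IsIdempotentElem.trace_eq_zero_iff hid').1
      (by rw [Matrix.trace_toLin'_eq, htr])
    simpa using this
  exact ⟨k, by rw [← hMp, hzero, mul_zero]⟩

/-- If `A` generates an MPU and `a`, `b` are left/right fixed points of the transfer matrix
with `aᵀb = 1`, then `aᵀ T^{ij} b = δ_{ij}`. -/
theorem stmt5 (d D : ℕ) (hd : 1 ≤ d) (hD : 1 ≤ D)
    (A : Fin d → Fin d → Matrix (Fin D) (Fin D) ℂ)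
    (hMPU : ∀ N : ℕ, 2 ≤ N → mpoU d D A N ∈ Matrix.unitaryGroup (Fin N → Fin d) ℂ)
    (a b : Fin D × Fin D → ℂ)
    (ha : Matrix.vecMul a (transferT d D A) = a)
    (hb : transferT d D A *ᵥ b = b)
    (hab : a ⬝ᵥ b = 1) :
    ∀ i j : Fin d, a ⬝ᵥ (Tmat d D A i j *ᵥ b) = if i = j then 1 else 0 := by
  intro i j
  have hT := trace_Tmat_mul_transferT_pow d D hd A hMPU
  have hd0 : (d : ℂ) ≠ 0 := by exact_mod_cast (by omega : d ≠ 0)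
  have hE : ∀ n, 2 ≤ n → (transferT d D A ^ n).trace = 1 := by
    intro n hn
    obtain ⟨n, rfl⟩ : ∃ l, n = l + 1 := ⟨n - 1, by omega⟩
    rw [pow_succ']
    nth_rewrite 1 [transferT]
    rw [Matrix.smul_mul, Finset.sum_mul, Matrix.trace_smul, Matrix.trace_sum]
    simp [hT n (by omega), hd0]
  set E := transferT d D A
  set P := Matrix.vecMulVec b a with hP
  have hEP : E * P = P := by rw [hP, Matrix.mul_vecMulVec, hb]
  have hPE : P * E = P := by rw [hP, Matrix.vecMulVec_mul, ha]
  have hPP : P * P = P := by rw [hP, Matrix.vecMulVec_mul_vecMulVec, hab, one_smul]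
  have hPtr : P.trace = 1 := by rw [hP, Matrix.trace_vecMulVec, dotProduct_comm, hab]
  have hEnP (n : ℕ) : E ^ n * P = P := by
    induction n with
    | zero => simp
    | succ n ih => rw [pow_succ, mul_assoc, hEP, ih]
  have hpow (n : ℕ) : (E - P) ^ (n + 1) = E ^ (n + 1) - P := by
    induction n with
    | zero => simp
    | succ n ih =>
      rw [pow_succ, ih, sub_mul, mul_sub, mul_sub, hPE, hPP, hEnP, sub_self, sub_zero, ← pow_succ]
  obtain ⟨n, hn⟩ := isNilpotent_of_trace_pow_eq_zero (E - P) fun n hn => by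
    obtain ⟨n, rfl⟩ : ∃ l, n = l + 1 := ⟨n - 1, by omega⟩
    rw [hpow, Matrix.trace_sub, hE _ hn, hPtr, sub_self]
  have hEn : E ^ (n + 1) = P := by
    rw [← sub_eq_zero, ← hpow, pow_succ, hn, zero_mul]
  rw [← hT (n + 1) (by omega) i j, hEn, hP, Matrix.mul_vecMulVec, Matrix.trace_vecMulVec,
    dotProduct_comm]
end
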